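/- Let d ≥ 1 be an integer, σ1, σ2 ∈ ℝ, 0 < q_i ≤ ∞ and 0 < p_i ≤ u_i < ∞ for i = 1, 2. Assume that (σ1 − σ2)/d > max{0, 1/u1 − 1/u2, (p1/u1)(1/p1 − 1/p2)} and that this maximum equals 0 (i.e. u2 ≤ u1 and p2 ≤ p1). Then there exist constants c1, c2 > 0 such that for all k ∈ ℕ, c1 · k^{−(σ1−σ2)/d} ≤ e_k(id : ñ^{σ1}_{u1,p1,q1}(Q) → ñ^{σ2}_{u2,p2,q2}(Q)) ≤ c2 · k^{−(σ1−σ2)/d}. -/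

import Mathlib

open scoped ENNReal NNReal

noncomputable section

/-- `Q_{j,m} ⊆ Q = [0,1)^d` iff `0 ≤ m i < 2^j` for every coordinate `i`. -/
def inUnitCube (d j : ℕ) (m : Fin d → ℤ) : Prop :=
  ∀ i, 0 ≤ m i ∧ m i < 2 ^ j

/-- For `ν ≤ j`: `Q_{j,m} ⊆ Q_{ν,k}`. -/
def cubeSub (d j ν : ℕ) (m k : Fin d → ℤ) : Prop :=
  ∀ i, k i * 2 ^ (j - ν) ≤ m i ∧ m i < (k i + 1) * 2 ^ (j - ν)

/-- The finite-dimensional Morrey quasi-norm `‖· | m^{2^{jd}}_{u,p}‖` (`ℝ≥0∞`-valued),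
on coefficients indexed by the `m ∈ ℤ^d` with `Q_{j,m} ⊆ Q` (other coordinates are ignored). -/
def mNorm (d : ℕ) (u p : ℝ) (j : ℕ) (lam : (Fin d → ℤ) → ℂ) : ℝ≥0∞ :=
  ⨆ νk : {νk : ℕ × (Fin d → ℤ) // νk.1 ≤ j ∧ inUnitCube d νk.1 νk.2},
    (2 : ℝ≥0∞) ^ ((d : ℝ) * ((j : ℝ) - (νk.1.1 : ℝ)) * (1 / u - 1 / p)) *
      (∑' m : {m : Fin d → ℤ // cubeSub d j νk.1.1 m νk.1.2},
        ((‖lam m.1‖₊ : ℝ≥0∞)) ^ p) ^ (1 / p)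

/-- The `ℓ_q^{2^{jd}}` quasi-norm (`0 < q < ∞`) on level-`j` coefficients. -/
def lqNorm (d : ℕ) (q : ℝ) (j : ℕ) (lam : (Fin d → ℤ) → ℂ) : ℝ≥0∞ :=
  (∑' m : {m : Fin d → ℤ // inUnitCube d j m}, ((‖lam m.1‖₊ : ℝ≥0∞)) ^ q) ^ (1 / q)

/-- The quasi-norm of the sequence space `ñ^σ_{u,p,q}(Q)`, `q ∈ (0,∞]`. -/
def nNorm (d : ℕ) (σ u p : ℝ) (q : ℝ≥0∞) (lam : ℕ → (Fin d → ℤ) → ℂ) : ℝ≥0∞ :=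
  if q = ∞ then
    ⨆ j : ℕ, (2 : ℝ≥0∞) ^ ((j : ℝ) * (σ - d / u)) * mNorm d u p j (lam j)
  else
    (∑' j : ℕ, ((2 : ℝ≥0∞) ^ ((j : ℝ) * (σ - d / u)) * mNorm d u p j (lam j)) ^ q.toReal) ^
      (1 / q.toReal)

/-- `k`-th entropy number of the identity map between two quasi-norms on one ambient group:
the infimum of all `ε > 0` such that the `N₁`-unit ball is covered by `2^(k-1)` `N₂`-balls of
radius `ε`. -/
def entropyNumber {Λ : Type*} [AddCommGroup Λ] (N₁ N₂ : Λ → ℝ≥0∞) (k : ℕ) : ℝ≥0∞ :=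
  sInf {ε : ℝ≥0∞ | 0 < ε ∧ ∃ c : Fin (2 ^ (k - 1)) → Λ,
    ∀ x : Λ, N₁ x ≤ 1 → ∃ i, N₂ (x - c i) ≤ ε}

/-- Operator quasi-norm of the identity map between two quasi-norms on one ambient space:
the smallest `C` with `N₂ x ≤ C · N₁ x` for all `x`. -/
def opNorm {Λ : Type*} (N₁ N₂ : Λ → ℝ≥0∞) : ℝ≥0∞ :=
  sInf {C : ℝ≥0∞ | ∀ x, N₂ x ≤ C * N₁ x}

end

/-!
After rescaling level `j` by `2^{jσ₁}`, its Morrey quasi-norm lies between the normalised `ℓ^{p₁}`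
mean over all `2^{jd}` level-`j` cubes and the sup norm. Since the maximum in the hypothesis is `0`,
Jensen's inequality bounds the embedding on level `j` by `2^{-j(σ₁ - σ₂)}`.

Lower bound: choose `j` with `2^{jd} ∼ k`. There are so many sign vectors on level `j` that, by an
exponential moment bound, one of them stays at normalised `ℓ^{p₂}` distance bounded below from all
`2^{k-1}` centres.

Upper bound: replace all levels `j ≥ J` by zero and approximate each level `j < J` uniformly up to
`2^{-K(J-j)}`. The unit ball of the `ℓ^p` mean in dimension `n` can be covered in the sup norm up to
`2^{-r}` by `2^{O((r+1)n)}` points of a scaled hyperbolic cross, so the cover costs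
`∑_{j<J} O(J-j) 2^{jd} ∼ 2^{Jd}` bits, while the level errors decay geometrically away from `J`.
-/

section

open Finset MeasureTheory
open scoped BigOperators

section EntropyNumber

variable {Λ : Type*} [AddCommGroup Λ] {N₁ N₂ : Λ → ℝ≥0∞} {k : ℕ} {ε : ℝ≥0∞}

lemma entropyNumber_le_of_finset_cover (hε : 0 < ε) (F : Finset Λ) (hF : #F ≤ 2 ^ (k - 1))
    (hcover : ∀ x, N₁ x ≤ 1 → ∃ c ∈ F, N₂ (x - c) ≤ ε) : entropyNumber N₁ N₂ k ≤ ε := by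
  obtain ⟨φ⟩ : Nonempty (F ↪ Fin (2 ^ (k - 1))) :=
    Function.Embedding.nonempty_of_card_le (by simpa using hF)
  refine sInf_le ⟨hε, Function.extend φ (fun c ↦ c.1) 0, fun x hx ↦ ?_⟩
  obtain ⟨c, hc, hxc⟩ := hcover x hx
  exact ⟨φ ⟨c, hc⟩, by rwa [φ.injective.extend_apply]⟩

lemma le_entropyNumber_of_forall_exists
    (h : ∀ c : Fin (2 ^ (k - 1)) → Λ, ∃ x, N₁ x ≤ 1 ∧ ∀ i, ε ≤ N₂ (x - c i)) :
    ε ≤ entropyNumber N₁ N₂ k := by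
  refine le_sInf ?_
  rintro δ ⟨-, c, hc⟩
  obtain ⟨x, hx, hfar⟩ := h c
  obtain ⟨i, hi⟩ := hc x hx
  exact (hfar i).trans hi

end EntropyNumber

section LpMean

variable {ι E : Type*} [NormedAddCommGroup E] {p r t : ℝ} {s : Finset ι} {x : ι → E}

/-- The normalised `ℓ^p` quasi-norm `(#s⁻¹ ∑_{m ∈ s} ‖x m‖ ^ p) ^ (1 / p)`. On the set of level-`j`
subcubes of a dyadic cube it absorbs the factor `2^{-d(j-ν)/p}` of the Morrey quasi-norm. -/
noncomputable def lpMean (p : ℝ) (s : Finset ι) (x : ι → E) : ℝ :=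
  (𝔼 m ∈ s, ‖x m‖ ^ p) ^ (1 / p)

lemma lpMean_nonneg : 0 ≤ lpMean p s x :=
  Real.rpow_nonneg (expect_nonneg fun _ _ ↦ by positivity) _

lemma lpMean_smul [NormedSpace ℝ E] (hp : 0 < p) (c : ℝ) :
    lpMean p s (c • x) = |c| * lpMean p s x := by
  have hx : 0 ≤ 𝔼 m ∈ s, ‖x m‖ ^ p := expect_nonneg fun _ _ ↦ by positivity
  simp only [lpMean, Pi.smul_apply, norm_smul, Real.norm_eq_abs,
    Real.mul_rpow (abs_nonneg c) (norm_nonneg _)]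
  rw [← mul_expect, Real.mul_rpow (by positivity) hx, one_div,
    Real.rpow_rpow_inv (abs_nonneg c) hp.ne']

lemma lpMean_le_of_norm_le (hp : 0 < p) (ht : 0 ≤ t) (h : ∀ m ∈ s, ‖x m‖ ≤ t) :
    lpMean p s x ≤ t := by
  obtain rfl | hs := s.eq_empty_or_nonempty
  · simpa [lpMean, hp.ne'] using ht
  · rw [lpMean, one_div, Real.rpow_inv_le_iff_of_pos (expect_nonneg fun _ _ ↦ by positivity) ht hp]
    exact expect_le hs fun m hm ↦ Real.rpow_le_rpow (norm_nonneg _) (h m hm) hp.le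

lemma sum_rpow_le_card_of_lpMean_le_one (hp : 0 < p) (h : lpMean p s x ≤ 1) :
    ∑ m ∈ s, ‖x m‖ ^ p ≤ #s := by
  have hmean : 𝔼 m ∈ s, ‖x m‖ ^ p ≤ 1 := by
    rwa [lpMean, one_div, Real.rpow_inv_le_iff_of_pos (expect_nonneg fun _ _ ↦ by positivity)
      zero_le_one hp, Real.one_rpow] at h
  rw [← card_mul_expect]
  exact mul_le_of_le_one_right (by positivity) hmean

lemma lpMean_le_lpMean (hp : 0 < p) (hpr : p ≤ r) : lpMean p s x ≤ lpMean r s x := by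
  have hr : 0 < r := hp.trans_le hpr
  obtain rfl | hs := s.eq_empty_or_nonempty
  · simp [lpMean, hp.ne', hr.ne']
  have jensen := Real.rpow_arith_mean_le_arith_mean_rpow s (fun _ ↦ (#s : ℝ)⁻¹)
    (fun m ↦ ‖x m‖ ^ p) (fun _ _ ↦ by positivity) (by simp [hs.card_ne_zero])
    (fun _ _ ↦ by positivity) ((one_le_div hp).2 hpr)
  have hpow (m : ι) : (‖x m‖ ^ p) ^ (r / p) = ‖x m‖ ^ r := by
    rw [← Real.rpow_mul (norm_nonneg _), mul_div_cancel₀ r hp.ne']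
  simp only [hpow, ← div_eq_inv_mul, ← sum_div, ← expect_eq_sum_div_card] at jensen
  have hx : 0 ≤ 𝔼 m ∈ s, ‖x m‖ ^ p := expect_nonneg fun _ _ ↦ by positivity
  calc lpMean p s x = ((𝔼 m ∈ s, ‖x m‖ ^ p) ^ (r / p)) ^ (1 / r) := by
        rw [lpMean, ← Real.rpow_mul hx]
        congr 1
        field_simp
    _ ≤ lpMean r s x := Real.rpow_le_rpow (by positivity) jensen (by positivity)

end LpMean

section HyperbolicCross

lemma sum_Icc_inv_one_add_abs_sq_le (X : ℕ) :
    ∑ z ∈ Icc (-(X : ℤ)) X, ((1 + |(z : ℝ)|) ^ 2)⁻¹ ≤ 4 - 2 / ((X : ℝ) + 1) := by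
  induction X with
  | zero => norm_num
  | succ X ih =>
    have hIcc : Icc (-((X + 1 : ℕ) : ℤ)) ((X + 1 : ℕ) : ℤ) =
        insert (-((X : ℤ) + 1)) (insert ((X : ℤ) + 1) (Icc (-(X : ℤ)) X)) := by
      ext z
      simp only [mem_Icc, mem_insert]
      omega
    have habs : |(X : ℝ) + 1| = X + 1 := abs_of_nonneg (by positivity)
    have hstep : ((1 + ((X : ℝ) + 1)) ^ 2)⁻¹ + ((1 + ((X : ℝ) + 1)) ^ 2)⁻¹ ≤
        2 / ((X : ℝ) + 1) - 2 / ((X : ℝ) + 1 + 1) := by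
      rw [← two_mul, ← div_eq_mul_inv, div_sub_div _ _ (by positivity) (by positivity),
        div_le_div_iff₀ (by positivity) (by positivity)]
      nlinarith [sq_nonneg (X : ℝ), (Nat.cast_nonneg X : (0 : ℝ) ≤ X)]
    rw [hIcc, sum_insert (by simp only [mem_Icc, mem_insert]; omega),
      sum_insert (by simp only [mem_Icc]; omega)]
    push_cast
    rw [abs_neg, habs]
    linarith

/-- The hyperbolic cross `{z ∈ ℤ^ι | ∏ (1 + |z i|) ≤ X}`, as a finite set. Its dilates serve as
centres of sup-norm covers of `ℓ^p`-mean balls. -/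
noncomputable def hyperbolicCross (ι : Type*) [Fintype ι] [DecidableEq ι] (X : ℕ) :
    Finset (ι → ℤ) :=
  {z ∈ Fintype.piFinset fun _ ↦ Icc (-(X : ℤ)) X | ∏ i, (1 + (z i).natAbs) ≤ X}

variable {ι : Type*} [Fintype ι] [DecidableEq ι] {X : ℕ}

lemma mem_hyperbolicCross {z : ι → ℤ} :
    z ∈ hyperbolicCross ι X ↔ ∏ i, (1 + |(z i : ℝ)|) ≤ X := by
  have hcast : ∏ i, (1 + |(z i : ℝ)|) = (∏ i, (1 + (z i).natAbs) : ℕ) := by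
    push_cast [Nat.cast_natAbs]
    rfl
  rw [hcast, Nat.cast_le, hyperbolicCross, mem_filter, and_iff_right_of_imp]
  intro hz
  refine Fintype.mem_piFinset.2 fun i ↦ ?_
  have hi := single_le_prod' (f := fun i ↦ 1 + (z i).natAbs) (fun i _ ↦ Nat.le_add_right 1 _)
    (mem_univ i)
  rw [mem_Icc]
  omega

-- Rankin's trick: on the cross `1 ≤ X ^ 2 * ∏ (1 + |z i|)⁻²`, and the sum of the right-hand side
-- over the whole box factorises.
lemma card_hyperbolicCross_le (X : ℕ) :
    #(hyperbolicCross ι X) ≤ X ^ 2 * 4 ^ Fintype.card ι := by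
  have hweight : ∀ z ∈ hyperbolicCross ι X,
      (1 : ℝ) ≤ (X : ℝ) ^ 2 * ∏ i, ((1 + |(z i : ℝ)|) ^ 2)⁻¹ := by
    intro z hz
    rw [prod_inv_distrib, prod_pow, ← div_eq_mul_inv, one_le_div (by positivity)]
    exact pow_le_pow_left₀ (by positivity) (mem_hyperbolicCross.1 hz) 2
  suffices (#(hyperbolicCross ι X) : ℝ) ≤ (X : ℝ) ^ 2 * 4 ^ Fintype.card ι by exact_mod_cast this
  calc (#(hyperbolicCross ι X) : ℝ) = ∑ z ∈ hyperbolicCross ι X, 1 := by simp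
    _ ≤ ∑ z ∈ hyperbolicCross ι X, (X : ℝ) ^ 2 * ∏ i, ((1 + |(z i : ℝ)|) ^ 2)⁻¹ :=
        sum_le_sum hweight
    _ ≤ ∑ z ∈ Fintype.piFinset fun _ : ι ↦ Icc (-(X : ℤ)) X,
          (X : ℝ) ^ 2 * ∏ i, ((1 + |(z i : ℝ)|) ^ 2)⁻¹ :=
        sum_le_sum_of_subset_of_nonneg (filter_subset _ _) fun _ _ _ ↦ by positivity
    _ = (X : ℝ) ^ 2 * (∑ z ∈ Icc (-(X : ℤ)) X, ((1 + |(z : ℝ)|) ^ 2)⁻¹) ^ Fintype.card ι := by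
        rw [← mul_sum, ← prod_univ_sum (fun _ : ι ↦ Icc (-(X : ℤ)) X)
          (fun _ z ↦ ((1 + |(z : ℝ)|) ^ 2)⁻¹), prod_const, card_univ]
    _ ≤ (X : ℝ) ^ 2 * 4 ^ Fintype.card ι := by
        gcongr
        exact (sum_Icc_inv_one_add_abs_sq_le X).trans (sub_le_self _ (by positivity))

end HyperbolicCross

section Covering

lemma one_add_le_two_mul_exp_rpow_div {p t : ℝ} (hp : 0 < p) (ht : 0 ≤ t) :
    1 + t ≤ 2 * Real.exp (t ^ p / p) := by
  have hone : 1 ≤ Real.exp (t ^ p / p) := Real.one_le_exp (by positivity)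
  have hle : t ≤ Real.exp (t ^ p / p) := by
    obtain rfl | hpos := ht.eq_or_lt
    · positivity
    · exact (Real.log_le_iff_le_exp hpos).1 (Real.log_le_rpow_div ht hp)
  linarith

variable {ι : Type*} {p : ℝ} {b r : ℕ}

lemma one_add_abs_floor_mul_two_pow_le (hp : 0 < p) (r : ℕ) (x : ℝ) :
    1 + |((⌊x * 2 ^ r⌋ : ℤ) : ℝ)| ≤ 2 ^ (r + 2) * Real.exp (|x| ^ p / p) := by
  have hfloor : |((⌊x * 2 ^ r⌋ : ℤ) : ℝ)| ≤ |x| * 2 ^ r + 1 := by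
    have habs : |x * 2 ^ r| = |x| * 2 ^ r := by
      rw [abs_mul, abs_of_pos (by positivity : (0 : ℝ) < 2 ^ r)]
    have hdiff : |((⌊x * 2 ^ r⌋ : ℤ) : ℝ) - x * 2 ^ r| ≤ 1 := by
      rw [abs_le]
      constructor <;> linarith [Int.floor_le (x * 2 ^ r), Int.lt_floor_add_one (x * 2 ^ r)]
    linarith [abs_sub_abs_le_abs_sub ((⌊x * 2 ^ r⌋ : ℤ) : ℝ) (x * 2 ^ r)]
  have hr : (1 : ℝ) ≤ 2 ^ r := one_le_pow₀ one_le_two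
  calc 1 + |((⌊x * 2 ^ r⌋ : ℤ) : ℝ)| ≤ 2 ^ r * (2 * (1 + |x|)) := by
        nlinarith [abs_nonneg x]
    _ ≤ 2 ^ r * (2 * (2 * Real.exp (|x| ^ p / p))) := by
        gcongr
        exact one_add_le_two_mul_exp_rpow_div hp (abs_nonneg x)
    _ = 2 ^ (r + 2) * Real.exp (|x| ^ p / p) := by ring

lemma prod_one_add_abs_floor_le [Fintype ι] (hp : 0 < p) (hb : Real.exp (1 / p) ≤ 2 ^ b)
    {x : ι → ℝ} (hx : ∑ i, |x i| ^ p ≤ Fintype.card ι) :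
    ∏ i, (1 + |((⌊x i * 2 ^ r⌋ : ℤ) : ℝ)|) ≤ (2 ^ ((r + 2 + b) * Fintype.card ι) : ℕ) := by
  set n := Fintype.card ι
  calc ∏ i, (1 + |((⌊x i * 2 ^ r⌋ : ℤ) : ℝ)|)
      ≤ ∏ i, 2 ^ (r + 2) * Real.exp (|x i| ^ p / p) :=
        prod_le_prod (fun _ _ ↦ by positivity)
          fun i _ ↦ one_add_abs_floor_mul_two_pow_le hp r (x i)
    _ = (2 ^ (r + 2)) ^ n * Real.exp ((∑ i, |x i| ^ p) / p) := by
        rw [prod_mul_distrib, prod_const, card_univ, ← Real.exp_sum, sum_div]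
    _ ≤ (2 ^ (r + 2)) ^ n * Real.exp (n / p) := by gcongr
    _ = (2 ^ (r + 2)) ^ n * Real.exp (1 / p) ^ n := by
        rw [← Real.exp_nat_mul, mul_one_div]
    _ ≤ (2 ^ (r + 2)) ^ n * (2 ^ b) ^ n := by gcongr
    _ = (2 ^ ((r + 2 + b) * n) : ℕ) := by
        push_cast
        rw [← mul_pow, ← pow_add, ← pow_mul]

lemma exists_finset_cover_real [Fintype ι] (hp : 0 < p) (hb : Real.exp (1 / p) ≤ 2 ^ b) (r : ℕ) :
    ∃ F : Finset (ι → ℝ), #F ≤ 2 ^ (2 * (r + 3 + b) * Fintype.card ι) ∧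
      ∀ x : ι → ℝ, ∑ i, |x i| ^ p ≤ Fintype.card ι →
        ∃ c ∈ F, ∀ i, |x i - c i| ≤ (2 ^ r)⁻¹ := by
  classical
  let X := 2 ^ ((r + 2 + b) * Fintype.card ι)
  refine ⟨(hyperbolicCross ι X).image fun z i ↦ z i / 2 ^ r, ?_, fun x hx ↦ ?_⟩
  · calc _ ≤ X ^ 2 * 4 ^ Fintype.card ι := card_image_le.trans (card_hyperbolicCross_le X)
      _ = 2 ^ (2 * (r + 3 + b) * Fintype.card ι) := by
        rw [show 4 = 2 ^ 2 by rfl, ← pow_mul, ← pow_mul, ← pow_add]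
        ring_nf
  · refine ⟨_, mem_image_of_mem _ <| mem_hyperbolicCross.2 <|
      prod_one_add_abs_floor_le (r := r) hp hb hx, fun i ↦ ?_⟩
    have hfract : x i - ⌊x i * 2 ^ r⌋ / 2 ^ r = Int.fract (x i * 2 ^ r) * (2 ^ r)⁻¹ := by
      rw [Int.fract]
      field_simp
    rw [hfract, abs_of_nonneg (by positivity)]
    exact mul_le_of_le_one_left (by positivity) (Int.fract_lt_one _).le

lemma exists_finset_cover_lpMean_ball (hp : 0 < p) (hb : Real.exp (1 / p) ≤ 2 ^ b)
    (s : Finset ι) (r : ℕ) :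
    ∃ F : Finset (ι → ℂ), #F ≤ 2 ^ (4 * (r + 4 + b) * #s) ∧
      ∀ x : ι → ℂ, lpMean p s x ≤ 1 → ∃ c ∈ F, ∀ m ∈ s, ‖x m - c m‖ ≤ (2 ^ r)⁻¹ := by
  classical
  obtain ⟨F, hF, hcover⟩ := exists_finset_cover_real (ι := s) hp hb (r + 1)
  rw [Fintype.card_coe] at hF
  let toComplex (c : (s → ℝ) × (s → ℝ)) (m : ι) : ℂ :=
    if hm : m ∈ s then ⟨c.1 ⟨m, hm⟩, c.2 ⟨m, hm⟩⟩ else 0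
  refine ⟨(F ×ˢ F).image toComplex, ?_, fun x hx ↦ ?_⟩
  · calc _ ≤ #F * #F := card_image_le.trans (card_product F F).le
      _ ≤ 2 ^ (2 * (r + 1 + 3 + b) * #s) * 2 ^ (2 * (r + 1 + 3 + b) * #s) := Nat.mul_le_mul hF hF
      _ = 2 ^ (4 * (r + 4 + b) * #s) := by ring
  · have hpart (f : ℂ → ℝ) (hf : ∀ z, |f z| ≤ ‖z‖) :
        ∑ m : s, |f (x m)| ^ p ≤ Fintype.card s := by
      calc _ ≤ ∑ m : s, ‖x m‖ ^ p := by gcongr; exact hf _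
        _ = ∑ m ∈ s, ‖x m‖ ^ p := sum_coe_sort s fun m ↦ ‖x m‖ ^ p
        _ ≤ Fintype.card s := by simpa using sum_rpow_le_card_of_lpMean_le_one hp hx
    obtain ⟨a, ha, hxa⟩ := hcover _ (hpart Complex.re Complex.abs_re_le_norm)
    obtain ⟨c, hc, hxc⟩ := hcover _ (hpart Complex.im Complex.abs_im_le_norm)
    refine ⟨_, mem_image_of_mem toComplex (mk_mem_product ha hc), fun m hm ↦ ?_⟩
    have hre : |(x m - toComplex (a, c) m).re| ≤ (2 ^ (r + 1))⁻¹ := by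
      simpa [toComplex, hm] using hxa ⟨m, hm⟩
    have him : |(x m - toComplex (a, c) m).im| ≤ (2 ^ (r + 1))⁻¹ := by
      simpa [toComplex, hm] using hxc ⟨m, hm⟩
    calc ‖x m - toComplex (a, c) m‖ ≤ (2 ^ (r + 1))⁻¹ + (2 ^ (r + 1))⁻¹ :=
          (Complex.norm_le_abs_re_add_abs_im _).trans (add_le_add hre him)
      _ = (2 ^ r)⁻¹ := by rw [pow_succ]; field_simp; norm_num

end Covering

section SignVectors

variable {ι E : Type*} [NormedAddCommGroup E] {p : ℝ} {v : Bool → E}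

lemma sum_bool_two_thirds_rpow_le (hp : 0 < p) (hv : 2 ≤ ‖v true - v false‖) (z : E) :
    ∑ β, (2 / 3 : ℝ) ^ (8 * ‖v β - z‖ ^ p) ≤ 16 / 15 := by
  have hle_one (w : E) : (2 / 3 : ℝ) ^ (8 * ‖w‖ ^ p) ≤ 1 :=
    Real.rpow_le_one (by norm_num) (by norm_num) (by positivity)
  have hle_of_one_le {w : E} (hw : 1 ≤ ‖w‖) : (2 / 3 : ℝ) ^ (8 * ‖w‖ ^ p) ≤ 1 / 15 := by
    calc (2 / 3 : ℝ) ^ (8 * ‖w‖ ^ p) ≤ (2 / 3) ^ ((8 : ℕ) : ℝ) := by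
          refine Real.rpow_le_rpow_of_exponent_ge (by norm_num) (by norm_num) ?_
          have := Real.one_le_rpow hw hp.le
          push_cast
          linarith
      _ ≤ 1 / 15 := by rw [Real.rpow_natCast]; norm_num
  have htriangle : 2 ≤ ‖v true - z‖ + ‖v false - z‖ := by
    calc 2 ≤ ‖(v true - z) - (v false - z)‖ := by rwa [sub_sub_sub_cancel_right]
      _ ≤ ‖v true - z‖ + ‖v false - z‖ := norm_sub_le _ _
  rw [Fintype.sum_bool]
  rcases le_or_gt 1 ‖v true - z‖ with h | h
  · linarith [hle_of_one_le h, hle_one (v false - z)]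
  · linarith [hle_of_one_le (w := v false - z) (by linarith), hle_one (v true - z)]

-- Chernoff's bound: a sign vector near `z` satisfies `1 ≤ (3 / 2) ^ n * ∏ (2 / 3) ^ (8 ‖·‖ ^ p)`,
-- and the sum of the right-hand side over all sign vectors factorises.
lemma card_sign_vectors_near_le [Fintype ι] [DecidableEq ι] (hp : 0 < p)
    (hv : 2 ≤ ‖v true - v false‖) (z : ι → E) :
    (#{e : ι → Bool | ∑ m, ‖v (e m) - z m‖ ^ p ≤ Fintype.card ι / 8} : ℝ) ≤
      (8 / 5) ^ Fintype.card ι := by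
  set n := Fintype.card ι
  let w (e : ι → Bool) : ℝ := ∏ m, (2 / 3 : ℝ) ^ (8 * ‖v (e m) - z m‖ ^ p)
  have hnear (e : ι → Bool) (he : ∑ m, ‖v (e m) - z m‖ ^ p ≤ n / 8) :
      1 ≤ (3 / 2 : ℝ) ^ n * w e := by
    calc (1 : ℝ) = (3 / 2 : ℝ) ^ n * (2 / 3) ^ (n : ℝ) := by
          rw [Real.rpow_natCast, ← mul_pow]
          norm_num
      _ ≤ (3 / 2 : ℝ) ^ n * w e := by
          simp only [w]
          rw [← Real.rpow_sum_of_pos (by norm_num), ← mul_sum]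
          gcongr (3 / 2 : ℝ) ^ n * ?_
          exact Real.rpow_le_rpow_of_exponent_ge (by norm_num) (by norm_num) (by linarith)
  calc (#{e : ι → Bool | ∑ m, ‖v (e m) - z m‖ ^ p ≤ n / 8} : ℝ)
      = ∑ e : ι → Bool with ∑ m, ‖v (e m) - z m‖ ^ p ≤ n / 8, 1 := by simp
    _ ≤ ∑ e : ι → Bool with ∑ m, ‖v (e m) - z m‖ ^ p ≤ n / 8, (3 / 2 : ℝ) ^ n * w e :=
        sum_le_sum fun e he ↦ hnear e (mem_filter.1 he).2
    _ ≤ ∑ e : ι → Bool, (3 / 2 : ℝ) ^ n * w e :=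
        sum_le_sum_of_subset_of_nonneg (filter_subset _ _) fun _ _ _ ↦ by positivity
    _ = (3 / 2 : ℝ) ^ n * ∏ m, ∑ β, (2 / 3 : ℝ) ^ (8 * ‖v β - z m‖ ^ p) := by
        rw [← mul_sum, prod_univ_sum, Fintype.piFinset_univ]
    _ ≤ (3 / 2 : ℝ) ^ n * ∏ _m : ι, (16 / 15) := by
        gcongr
        exact sum_bool_two_thirds_rpow_le hp hv _
    _ = (8 / 5) ^ n := by
        rw [prod_const, card_univ, ← mul_pow]
        norm_num

lemma two_pow_mul_eight_fifths_pow_lt {k n : ℕ} (hn : 0 < n) (hkn : 4 * k ≤ n) :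
    (2 : ℝ) ^ k * (8 / 5) ^ n < 2 ^ n := by
  calc (2 : ℝ) ^ k * (8 / 5) ^ n ≤ ((6 / 5) ^ 4) ^ k * (8 / 5) ^ n := by gcongr; norm_num
    _ ≤ (6 / 5) ^ n * (8 / 5) ^ n := by
        rw [← pow_mul]
        gcongr
        norm_num
    _ = (48 / 25) ^ n := by rw [← mul_pow]; norm_num
    _ < 2 ^ n := pow_lt_pow_left₀ (by norm_num) (by positivity) hn.ne'

lemma exists_sign_vector_far [Fintype ι] {κ : Type*} [Fintype κ] (hp : 0 < p)
    (hv : 2 ≤ ‖v true - v false‖)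
    (hκ : Fintype.card κ * (8 / 5 : ℝ) ^ Fintype.card ι < 2 ^ Fintype.card ι) (c : κ → ι → E) :
    ∃ e : ι → Bool, ∀ i, (Fintype.card ι / 8 : ℝ) < ∑ m, ‖v (e m) - c i m‖ ^ p := by
  classical
  by_contra! hcon
  have hcover : (univ : Finset (ι → Bool)) ⊆ univ.biUnion fun i ↦
      {e : ι → Bool | ∑ m, ‖v (e m) - c i m‖ ^ p ≤ Fintype.card ι / 8} := by
    intro e _
    simpa using hcon e
  have hcard : (2 : ℝ) ^ Fintype.card ι ≤ Fintype.card κ * (8 / 5 : ℝ) ^ Fintype.card ι := by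
    calc (2 : ℝ) ^ Fintype.card ι = #(univ : Finset (ι → Bool)) := by simp
      _ ≤ ∑ i, (#{e : ι → Bool | ∑ m, ‖v (e m) - c i m‖ ^ p ≤ Fintype.card ι / 8} : ℝ) := by
          exact_mod_cast (card_le_card hcover).trans card_biUnion_le
      _ ≤ ∑ _i : κ, (8 / 5 : ℝ) ^ Fintype.card ι :=
          sum_le_sum fun i _ ↦ card_sign_vectors_near_le hp hv (c i)
      _ = Fintype.card κ * (8 / 5 : ℝ) ^ Fintype.card ι := by simp
  exact hcard.not_gt hκ

lemma exists_forall_le_lpMean_sub {s : Finset ι} (hs : s.Nonempty) {k : ℕ} (hk : 4 * k ≤ #s)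
    (hp : 0 < p) {a b : E} (hab : 2 ≤ ‖a - b‖) (c : Fin (2 ^ k) → ι → E) :
    ∃ e : ι → E, (∀ m, e m = a ∨ e m = b) ∧ ∀ i, (1 / 8) ^ (1 / p) ≤ lpMean p s (e - c i) := by
  classical
  let v (β : Bool) : E := bif β then a else b
  obtain ⟨e, he⟩ := exists_sign_vector_far (ι := s) (v := v) hp hab
    (by simpa using two_pow_mul_eight_fifths_pow_lt hs.card_pos hk) fun i m ↦ c i m
  refine ⟨fun m ↦ if hm : m ∈ s then v (e ⟨m, hm⟩) else a, fun m ↦ ?_, fun i ↦ ?_⟩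
  · dsimp only
    split_ifs with hm
    · cases e ⟨m, hm⟩ <;> simp [v]
    · exact Or.inl rfl
  · refine Real.rpow_le_rpow (by norm_num) ?_ (by positivity)
    have hfar := he i
    rw [Fintype.card_coe] at hfar
    rw [expect_eq_sum_div_card, le_div_iff₀ (by exact_mod_cast hs.card_pos), ← sum_coe_sort s]
    simp only [Pi.sub_apply, coe_mem, dif_pos]
    linarith

end SignVectors

section DyadicCubes

variable {d j ν : ℕ} {k m : Fin d → ℤ}

/-- The `m ∈ ℤ^d` with `Q_{j,m} ⊆ Q_{ν,k}`, as a finite set (for `ν ≤ j`). -/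
noncomputable def subcubes (d j ν : ℕ) (k : Fin d → ℤ) : Finset (Fin d → ℤ) :=
  Fintype.piFinset fun i ↦ Ico (k i * 2 ^ (j - ν)) ((k i + 1) * 2 ^ (j - ν))

lemma mem_subcubes : m ∈ subcubes d j ν k ↔ cubeSub d j ν m k := by
  simp only [subcubes, Fintype.mem_piFinset, mem_Ico, cubeSub]

lemma mem_subcubes_zero : m ∈ subcubes d j 0 0 ↔ inUnitCube d j m := by
  simp [mem_subcubes, cubeSub, inUnitCube]

lemma card_subcubes : #(subcubes d j ν k) = 2 ^ ((j - ν) * d) := by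
  have hside (a : ℤ) : #(Ico (a * 2 ^ (j - ν)) ((a + 1) * 2 ^ (j - ν))) = 2 ^ (j - ν) := by
    rw [Int.card_Ico, ← sub_mul, add_sub_cancel_left, one_mul]
    exact_mod_cast Int.toNat_natCast (2 ^ (j - ν))
  simp [subcubes, Fintype.card_piFinset, hside, pow_mul]

lemma subcubes_subset_unit (hν : ν ≤ j) (hk : inUnitCube d ν k) :
    subcubes d j ν k ⊆ subcubes d j 0 0 := by
  intro m hm
  rw [mem_subcubes] at hm
  rw [mem_subcubes_zero]
  intro i
  obtain ⟨hk₀, hk₁⟩ := hk i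
  obtain ⟨hm₀, hm₁⟩ := hm i
  refine ⟨(by positivity : 0 ≤ k i * 2 ^ (j - ν)).trans hm₀, ?_⟩
  calc m i < (k i + 1) * 2 ^ (j - ν) := hm₁
    _ ≤ 2 ^ ν * 2 ^ (j - ν) := by gcongr; exact hk₁
    _ = 2 ^ j := by rw [← pow_add, Nat.add_sub_of_le hν]

end DyadicCubes

section LevelNorm

variable {d j : ℕ} {σ σ₁ σ₂ u u₁ u₂ p p₁ p₂ t : ℝ} {x : (Fin d → ℤ) → ℂ}

/-- The contribution `2^{j(σ - d/u)} ‖x | m^{2^{jd}}_{u,p}‖` of the coefficients `x` of level `j`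
to the quasi-norm of `ñ^σ_{u,p,q}(Q)`. -/
noncomputable def levelNorm (d : ℕ) (σ u p : ℝ) (j : ℕ) (x : (Fin d → ℤ) → ℂ) : ℝ≥0∞ :=
  2 ^ (j * (σ - d / u)) * mNorm d u p j x

lemma two_rpow_eq_ofReal (t : ℝ) : (2 : ℝ≥0∞) ^ t = ENNReal.ofReal (2 ^ t) := by
  rw [← ENNReal.ofReal_rpow_of_pos two_pos, ENNReal.ofReal_ofNat]

lemma tsum_cubeSub_eq_ofReal_sum (hp : 0 < p) (ν : ℕ) (k : Fin d → ℤ) :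
    ∑' m : {m : Fin d → ℤ // cubeSub d j ν m k}, (‖x m.1‖₊ : ℝ≥0∞) ^ p =
      ENNReal.ofReal (∑ m ∈ subcubes d j ν k, ‖x m‖ ^ p) := by
  calc ∑' m : {m : Fin d → ℤ // cubeSub d j ν m k}, (‖x m.1‖₊ : ℝ≥0∞) ^ p
      = ∑' m : subcubes d j ν k, (‖x m.1‖₊ : ℝ≥0∞) ^ p :=
        ((Equiv.subtypeEquivRight fun _ ↦ mem_subcubes).tsum_eq _).symm
    _ = ∑ m ∈ subcubes d j ν k, (‖x m‖₊ : ℝ≥0∞) ^ p :=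
        Finset.tsum_subtype _ fun m ↦ (‖x m‖₊ : ℝ≥0∞) ^ p
    _ = ENNReal.ofReal (∑ m ∈ subcubes d j ν k, ‖x m‖ ^ p) := by
        rw [ENNReal.ofReal_sum_of_nonneg fun _ _ ↦ by positivity]
        refine sum_congr rfl fun m _ ↦ ?_
        rw [← ENNReal.ofReal_rpow_of_nonneg (norm_nonneg _) hp.le, ofReal_norm, enorm_eq_nnnorm]

lemma sum_subcubes_rpow_eq {ν : ℕ} (hν : ν ≤ j) (k : Fin d → ℤ) :
    (∑ m ∈ subcubes d j ν k, ‖x m‖ ^ p) ^ (1 / p) =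
      2 ^ (d * (j - ν) / p : ℝ) * lpMean p (subcubes d j ν k) x := by
  have hcard : (#(subcubes d j ν k) : ℝ) = 2 ^ (d * (j - ν) : ℝ) := by
    rw [card_subcubes, ← Nat.cast_sub hν, mul_comm (d : ℝ)]
    exact_mod_cast (Real.rpow_natCast 2 ((j - ν) * d)).symm
  rw [← card_mul_expect, Real.mul_rpow (by positivity) (expect_nonneg fun _ _ ↦ by positivity),
    hcard, ← Real.rpow_mul two_pos.le, mul_one_div, lpMean]

lemma levelNorm_eq_iSup (hp : 0 < p) :
    levelNorm d σ u p j x =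
      ⨆ νk : {νk : ℕ × (Fin d → ℤ) // νk.1 ≤ j ∧ inUnitCube d νk.1 νk.2},
        ENNReal.ofReal (2 ^ (j * σ) * 2 ^ (-(νk.1.1 * d / u)) *
          lpMean p (subcubes d j νk.1.1 νk.1.2) x) := by
  rw [levelNorm, mNorm, ENNReal.mul_iSup]
  congr! 2 with νk
  obtain ⟨⟨ν, k⟩, hν, -⟩ := νk
  dsimp only at hν ⊢
  rw [tsum_cubeSub_eq_ofReal_sum hp, two_rpow_eq_ofReal, two_rpow_eq_ofReal,
    ENNReal.ofReal_rpow_of_nonneg (sum_nonneg fun _ _ ↦ by positivity) (by positivity),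
    sum_subcubes_rpow_eq hν, ← ENNReal.ofReal_mul (by positivity),
    ← ENNReal.ofReal_mul (by positivity), ← mul_assoc, ← mul_assoc, ← Real.rpow_add two_pos,
    ← Real.rpow_add two_pos, ← Real.rpow_add two_pos]
  ring_nf

lemma ofReal_mul_lpMean_le_levelNorm (hp : 0 < p) :
    ENNReal.ofReal (2 ^ (j * σ) * lpMean p (subcubes d j 0 0) x) ≤ levelNorm d σ u p j x := by
  rw [levelNorm_eq_iSup hp]
  refine le_iSup_of_le ⟨(0, 0), Nat.zero_le _, by simp [inUnitCube]⟩ ?_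
  simp

lemma levelNorm_le_of_norm_le (hp : 0 < p) (hu : 0 < u) (ht : 0 ≤ t)
    (h : ∀ m ∈ subcubes d j 0 0, ‖x m‖ ≤ t) :
    levelNorm d σ u p j x ≤ ENNReal.ofReal (2 ^ (j * σ) * t) := by
  rw [levelNorm_eq_iSup hp]
  refine iSup_le fun ⟨⟨ν, k⟩, hν, hk⟩ ↦ ENNReal.ofReal_le_ofReal ?_
  have hweight : (2 : ℝ) ^ (-(ν * d / u)) ≤ 1 :=
    Real.rpow_le_one_of_one_le_of_nonpos one_le_two (neg_nonpos.2 (by positivity))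
  rw [mul_assoc]
  gcongr 2 ^ (j * σ) * ?_
  calc _ ≤ 1 * lpMean p (subcubes d j ν k) x := by gcongr; exact lpMean_nonneg
    _ ≤ t := by
        rw [one_mul]
        exact lpMean_le_of_norm_le hp ht fun m hm ↦ h m (subcubes_subset_unit hν hk hm)

lemma levelNorm_le_two_rpow_mul_levelNorm (hp₂ : 0 < p₂) (hp : p₂ ≤ p₁) (hu₂ : 0 < u₂)
    (hu : u₂ ≤ u₁) :
    levelNorm d σ₂ u₂ p₂ j x ≤
      ENNReal.ofReal (2 ^ (-(j * (σ₁ - σ₂)))) * levelNorm d σ₁ u₁ p₁ j x := by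
  rw [levelNorm_eq_iSup hp₂, levelNorm_eq_iSup (hp₂.trans_le hp), ENNReal.mul_iSup]
  refine iSup_mono fun ⟨⟨ν, k⟩, hν, hk⟩ ↦ ?_
  rw [← ENNReal.ofReal_mul (by positivity)]
  refine ENNReal.ofReal_le_ofReal ?_
  have hσ : (2 : ℝ) ^ (j * σ₂) = 2 ^ (-(j * (σ₁ - σ₂))) * 2 ^ (j * σ₁) := by
    rw [← Real.rpow_add two_pos]
    ring_nf
  rw [hσ, ← mul_assoc, ← mul_assoc]
  gcongr
  · exact lpMean_nonneg
  · exact one_le_two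
  · exact lpMean_le_lpMean hp₂ hp

end LevelNorm

section SequenceNorm

variable {d : ℕ} {σ u p s : ℝ} {q : ℝ≥0∞}

lemma nNorm_eq_eLpNorm (hq : q ≠ 0) (x : ℕ → (Fin d → ℤ) → ℂ) :
    nNorm d σ u p q x = eLpNorm (fun j ↦ levelNorm d σ u p j (x j)) q Measure.count := by
  rw [nNorm]
  split_ifs with htop
  · simp only [htop, eLpNorm_exponent_top, eLpNormEssSup_count, enorm_eq_self, levelNorm]
  · simp only [eLpNorm_eq_lintegral_rpow_enorm_toReal hq htop, lintegral_count, enorm_eq_self,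
      levelNorm]

lemma levelNorm_le_nNorm (hq : q ≠ 0) (x : ℕ → (Fin d → ℤ) → ℂ) (j : ℕ) :
    levelNorm d σ u p j (x j) ≤ nNorm d σ u p q x := by
  rw [nNorm_eq_eLpNorm hq]
  exact enorm_le_eLpNorm_count (fun j ↦ levelNorm d σ u p j (x j)) j hq

lemma nNorm_single (hq : q ≠ 0) (hp : 0 < p) (hu : 0 < u) (j : ℕ) (y : (Fin d → ℤ) → ℂ) :
    nNorm d σ u p q (Pi.single j y) = levelNorm d σ u p j y := by
  have hzero (i : ℕ) : levelNorm d σ u p i 0 = 0 := by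
    simpa using levelNorm_le_of_norm_le (d := d) (j := i) (σ := σ) (x := 0) hp hu le_rfl
  have hsingle : (fun i ↦ levelNorm d σ u p i (Pi.single (M := fun _ ↦ _) j y i)) =
      Set.indicator {j} fun _ ↦ levelNorm d σ u p j y := by
    rw [Set.indicator_singleton]
    exact funext fun i ↦ Pi.apply_single (levelNorm d σ u p) hzero j y i
  rw [nNorm_eq_eLpNorm hq, hsingle, eLpNorm_indicator_const' (by simp) (by simp) hq]
  simp

lemma summable_two_rpow_neg_mul_abs (hs : 0 < s) :
    Summable fun z : ℤ ↦ (2 : ℝ) ^ (-(s * |(z : ℝ)|)) := by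
  have hgeom : Summable fun n : ℕ ↦ ((2 : ℝ) ^ (-s)) ^ n :=
    summable_geometric_of_lt_one (by positivity)
      (Real.rpow_lt_one_of_one_lt_of_neg one_lt_two (by linarith))
  have hpow (n : ℕ) : ((2 : ℝ) ^ (-s)) ^ n = 2 ^ (-(s * n)) := by
    rw [← Real.rpow_mul_natCast two_pos.le, neg_mul]
  simp only [hpow] at hgeom
  exact .of_nat_of_neg (by simpa using hgeom) (by simpa using hgeom)

lemma exists_tsum_two_rpow_neg_mul_abs_sub_le (hs : 0 < s) :
    ∃ C : ℝ≥0, ∀ J : ℕ,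
      ∑' j : ℕ, ENNReal.ofReal (2 ^ (-(s * |(J : ℝ) - j|))) ≤ C := by
  refine ⟨(∑' z : ℤ, ENNReal.ofReal (2 ^ (-(s * |(z : ℝ)|)))).toNNReal, fun J ↦ ?_⟩
  rw [ENNReal.coe_toNNReal (summable_two_rpow_neg_mul_abs hs).tsum_ofReal_ne_top]
  have hinj : Function.Injective fun j : ℕ ↦ (J : ℤ) - j := fun i j hij ↦ by
    simpa using hij
  simpa using ENNReal.tsum_comp_le_tsum_of_injective hinj
    fun z ↦ ENNReal.ofReal (2 ^ (-(s * |(z : ℝ)|)))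

lemma exists_eLpNorm_two_rpow_neg_mul_abs_sub_le (hs : 0 < s) (hq : q ≠ 0) :
    ∃ C : ℝ≥0, ∀ J : ℕ,
      eLpNorm (fun j : ℕ ↦ (2 : ℝ) ^ (-(s * |(J : ℝ) - j|))) q Measure.count ≤ C := by
  obtain rfl | hqtop := eq_or_ne q ∞
  · refine ⟨1, fun J ↦ ?_⟩
    rw [eLpNorm_exponent_top, eLpNormEssSup_count]
    refine iSup_le fun j ↦ ?_
    rw [Real.enorm_of_nonneg (by positivity), ENNReal.coe_one, ENNReal.ofReal_le_one]
    exact Real.rpow_le_one_of_one_le_of_nonpos one_le_two (neg_nonpos.2 (by positivity))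
  · have hqpos : 0 < q.toReal := ENNReal.toReal_pos hq hqtop
    obtain ⟨C, hC⟩ := exists_tsum_two_rpow_neg_mul_abs_sub_le (mul_pos hs hqpos)
    refine ⟨C ^ (1 / q.toReal), fun J ↦ ?_⟩
    rw [eLpNorm_eq_lintegral_rpow_enorm_toReal hq hqtop, lintegral_count,
      ENNReal.coe_rpow_of_nonneg _ (by positivity)]
    gcongr
    convert hC J using 3 with j
    rw [Real.enorm_of_nonneg (by positivity),
      ENNReal.ofReal_rpow_of_nonneg (by positivity) hqpos.le, ← Real.rpow_mul two_pos.le,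
      neg_mul, mul_right_comm]

lemma exists_nNorm_le_of_decay (hs : 0 < s) (hq : q ≠ 0) :
    ∃ C : ℝ, 0 < C ∧ ∀ {d : ℕ} {σ u p : ℝ} {x : ℕ → (Fin d → ℤ) → ℂ} {J : ℕ} {D : ℝ}, 0 ≤ D →
      (∀ j, levelNorm d σ u p j (x j) ≤ ENNReal.ofReal (D * 2 ^ (-(s * |(J : ℝ) - j|)))) →
        nNorm d σ u p q x ≤ ENNReal.ofReal (D * C) := by
  obtain ⟨C, hC⟩ := exists_eLpNorm_two_rpow_neg_mul_abs_sub_le hs hq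
  refine ⟨C + 1, by positivity, fun {d σ u p x J D} hD hx ↦ ?_⟩
  let g (j : ℕ) : ℝ := 2 ^ (-(s * |(J : ℝ) - j|))
  calc nNorm d σ u p q x = eLpNorm (fun j ↦ levelNorm d σ u p j (x j)) q Measure.count :=
        nNorm_eq_eLpNorm hq x
    _ ≤ eLpNorm (D • g) q Measure.count := by
        refine eLpNorm_mono_enorm fun j ↦ ?_
        rw [enorm_eq_self, Pi.smul_apply, smul_eq_mul, Real.enorm_of_nonneg (by positivity)]
        exact hx j
    _ = ENNReal.ofReal D * eLpNorm g q Measure.count := by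
        rw [eLpNorm_const_smul, Real.enorm_of_nonneg hD]
    _ ≤ ENNReal.ofReal D * ENNReal.ofReal (C + 1) := by
        gcongr
        refine (hC J).trans ?_
        rw [← ENNReal.ofReal_coe_nnreal]
        exact ENNReal.ofReal_le_ofReal (by linarith)
    _ = ENNReal.ofReal (D * (C + 1)) := (ENNReal.ofReal_mul hD).symm

end SequenceNorm

section LowerBound

variable {d k j : ℕ} {σ₁ σ₂ u₁ u₂ p₁ p₂ s A : ℝ} {q₁ q₂ : ℝ≥0∞}

lemma le_entropyNumber_nNorm_of_level (hp₁ : 0 < p₁) (hu₁ : 0 < u₁) (hp₂ : 0 < p₂) (hq₁ : q₁ ≠ 0)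
    (hq₂ : q₂ ≠ 0) (hk : 4 * (k - 1) ≤ (2 ^ d) ^ j) :
    ENNReal.ofReal (2 ^ (-(j * (σ₁ - σ₂))) * (1 / 8) ^ (1 / p₂)) ≤
      entropyNumber (nNorm d σ₁ u₁ p₁ q₁) (nNorm d σ₂ u₂ p₂ q₂) k := by
  refine le_entropyNumber_of_forall_exists fun c ↦ ?_
  have hcard : #(subcubes d j 0 0) = (2 ^ d) ^ j := by
    rw [card_subcubes, Nat.sub_zero, mul_comm, pow_mul]
  have hcancel : (2 : ℝ) ^ (j * σ₁) * 2 ^ (-(j * σ₁)) = 1 := by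
    rw [← Real.rpow_add two_pos, add_neg_cancel, Real.rpow_zero]
  obtain ⟨e, he, hfar⟩ := exists_forall_le_lpMean_sub (s := subcubes d j 0 0)
    (card_pos.1 (hcard ▸ by positivity)) (hcard ▸ hk) hp₂ (a := (1 : ℂ)) (b := -1) (by norm_num)
    fun i ↦ (2 : ℝ) ^ (j * σ₁) • c i j
  refine ⟨Pi.single j ((2 : ℝ) ^ (-(j * σ₁)) • e), ?_, fun i ↦ ?_⟩
  · rw [nNorm_single hq₁ hp₁ hu₁, ← ENNReal.ofReal_one, ← hcancel]
    have hnorm (m : Fin d → ℤ) : ‖((2 : ℝ) ^ (-(j * σ₁)) • e) m‖ ≤ 2 ^ (-(j * σ₁)) := by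
      rcases he m with h | h <;> simp [h, abs_of_pos (Real.rpow_pos_of_pos two_pos _)]
    exact levelNorm_le_of_norm_le hp₁ hu₁ (by positivity) fun m _ ↦ hnorm m
  · have hdiff : (Pi.single j ((2 : ℝ) ^ (-(j * σ₁)) • e) - c i : ℕ → (Fin d → ℤ) → ℂ) j =
        (2 : ℝ) ^ (-(j * σ₁)) • (e - (2 : ℝ) ^ (j * σ₁) • c i j) := by
      rw [smul_sub, smul_smul, mul_comm (2 ^ _), hcancel, one_smul, Pi.sub_apply,
        Pi.single_eq_same]
    have hexp : (2 : ℝ) ^ (-(j * (σ₁ - σ₂))) = 2 ^ (j * σ₂) * 2 ^ (-(j * σ₁)) := by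
      rw [← Real.rpow_add two_pos]
      ring_nf
    calc _ ≤ ENNReal.ofReal (2 ^ (j * σ₂) * lpMean p₂ (subcubes d j 0 0)
            ((2 : ℝ) ^ (-(j * σ₁)) • (e - (2 : ℝ) ^ (j * σ₁) • c i j))) := by
          rw [lpMean_smul hp₂, abs_of_pos (by positivity), ← mul_assoc, hexp]
          gcongr
          exact hfar i
      _ ≤ _ := hdiff ▸ ofReal_mul_lpMean_le_levelNorm hp₂
      _ ≤ _ := levelNorm_le_nNorm hq₂ _ j

lemma two_rpow_neg_mul_eq (hd : d ≠ 0) (s : ℝ) (j : ℕ) :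
    (2 : ℝ) ^ (-(j * s)) = ((2 ^ d) ^ j) ^ (-s / d) := by
  rw [← pow_mul, ← Real.rpow_natCast_mul two_pos.le]
  congr 1
  push_cast
  field_simp

lemma mul_rpow_le_two_rpow_neg_mul (hd : d ≠ 0) (hs : 0 ≤ s) (hA : 0 ≤ A)
    (hj : (2 ^ d) ^ j ≤ A * k) :
    A ^ (-s / d) * (k : ℝ) ^ (-s / d) ≤ 2 ^ (-(j * s)) := by
  rw [two_rpow_neg_mul_eq hd, ← Real.mul_rpow hA (by positivity)]
  exact Real.rpow_le_rpow_of_nonpos (by positivity) hj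
    (div_nonpos_of_nonpos_of_nonneg (neg_nonpos.2 hs) (by positivity))

lemma exists_mul_rpow_le_entropyNumber_nNorm (hd : d ≠ 0) (hσ : σ₂ ≤ σ₁) (hp₁ : 0 < p₁)
    (hu₁ : 0 < u₁) (hp₂ : 0 < p₂) (hq₁ : q₁ ≠ 0) (hq₂ : q₂ ≠ 0) :
    ∃ C : ℝ, 0 < C ∧ ∀ k : ℕ, 0 < k → ENNReal.ofReal (C * k ^ (-(σ₁ - σ₂) / d)) ≤
      entropyNumber (nNorm d σ₁ u₁ p₁ q₁) (nNorm d σ₂ u₂ p₂ q₂) k := by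
  refine ⟨(2 ^ d * 4) ^ (-(σ₁ - σ₂) / d) * (1 / 8) ^ (1 / p₂), by positivity, fun k hk ↦ ?_⟩
  have hbase : 1 < 2 ^ d := Nat.one_lt_two_pow hd
  set j := Nat.clog (2 ^ d) (4 * k)
  have hlower : 4 * k ≤ (2 ^ d) ^ j := Nat.le_pow_clog hbase _
  have hupper : (2 ^ d) ^ j ≤ 2 ^ d * 4 * k := by
    calc (2 ^ d) ^ j = 2 ^ d * (2 ^ d) ^ (j - 1) :=
          (mul_pow_sub_one (Nat.clog_pos hbase (by omega)).ne' _).symm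
      _ ≤ 2 ^ d * (4 * k) := by gcongr; exact (Nat.pow_pred_clog_lt_self hbase (by omega)).le
      _ = 2 ^ d * 4 * k := (mul_assoc _ _ _).symm
  refine le_trans (ENNReal.ofReal_le_ofReal ?_)
    (le_entropyNumber_nNorm_of_level (j := j) hp₁ hu₁ hp₂ hq₁ hq₂ (by omega))
  rw [mul_right_comm]
  gcongr
  exact mul_rpow_le_two_rpow_neg_mul hd (sub_nonneg.2 hσ) (by positivity) (by exact_mod_cast hupper)

end LowerBound

section UpperBound

lemma exists_finset_mem_of_forall_mem {ι Y : Type*} [Zero Y] (s : Finset ι) (F : ι → Finset Y) :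
    ∃ G : Finset (ι → Y), #G ≤ ∏ i ∈ s, #(F i) ∧
      ∀ c : ι → Y, (∀ i ∈ s, c i ∈ F i) → (∀ i ∉ s, c i = 0) → c ∈ G := by
  classical
  refine ⟨(s.finsupp F).image (⇑), card_image_le.trans (card_finsupp s F).le,
    fun c hmem hzero ↦ mem_image.2 ⟨Finsupp.onFinset s c fun i hi ↦ ?_, ?_, rfl⟩⟩
  · exact not_imp_comm.1 (hzero i) hi
  · exact mem_finsupp_iff.2 ⟨Finsupp.support_onFinset_subset, hmem⟩

lemma sum_range_sub_mul_pow_add_le {N : ℕ} (hN : 2 ≤ N) (J : ℕ) :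
    ∑ j ∈ range J, (J - j) * N ^ j + (J + 2) ≤ 2 * N ^ J := by
  induction J with
  | zero => simp
  | succ J ih =>
    have hsum : ∑ j ∈ range (J + 1), (J + 1 - j) * N ^ j =
        N * ∑ j ∈ range J, (J - j) * N ^ j + (J + 1) := by
      rw [sum_range_succ', mul_sum]
      simp only [Nat.add_sub_add_right, pow_succ', Nat.sub_zero, pow_zero, mul_one]
      exact congrArg (· + (J + 1)) (sum_congr rfl fun j _ ↦ mul_left_comm _ _ _)
    calc _ = N * ∑ j ∈ range J, (J - j) * N ^ j + 2 * (J + 2) := by rw [hsum]; ring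
      _ ≤ N * (∑ j ∈ range J, (J - j) * N ^ j + (J + 2)) := by rw [mul_add N]; gcongr
      _ ≤ 2 * N ^ (J + 1) := by rw [pow_succ', mul_left_comm]; gcongr

lemma sum_range_mul_sub_add_mul_pow_le {N : ℕ} (hN : 2 ≤ N) (K a J : ℕ) :
    ∑ j ∈ range J, (K * (J - j) + a) * N ^ j ≤ 2 * (K + a) * (N ^ J - 1) := by
  calc ∑ j ∈ range J, (K * (J - j) + a) * N ^ j
      ≤ ∑ j ∈ range J, (K + a) * ((J - j) * N ^ j) := by
        refine sum_le_sum fun j hj ↦ ?_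
        have hJj : 1 ≤ J - j := Nat.sub_pos_of_lt (mem_range.1 hj)
        rw [← mul_assoc, add_mul K]
        gcongr
        exact Nat.le_mul_of_pos_right a hJj
    _ = (K + a) * ∑ j ∈ range J, (J - j) * N ^ j := (mul_sum ..).symm
    _ ≤ (K + a) * (2 * (N ^ J - 1)) := by
        gcongr
        have := sum_range_sub_mul_pow_add_le hN J
        omega
    _ = 2 * (K + a) * (N ^ J - 1) := by ring

variable {d b k : ℕ} {σ₁ σ₂ u₁ u₂ p₁ p₂ s A : ℝ} {q₁ q₂ : ℝ≥0∞}

lemma exists_finset_cover_levelNorm (hp₁ : 0 < p₁) (hp₂ : 0 < p₂) (hu₂ : 0 < u₂)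
    (hb : Real.exp (1 / p₁) ≤ 2 ^ b) (j r : ℕ) :
    ∃ F : Finset ((Fin d → ℤ) → ℂ), #F ≤ 2 ^ (4 * (r + 4 + b) * (2 ^ d) ^ j) ∧
      ∀ y, levelNorm d σ₁ u₁ p₁ j y ≤ 1 → ∃ c ∈ F,
        levelNorm d σ₂ u₂ p₂ j (y - c) ≤ ENNReal.ofReal (2 ^ (-(j * (σ₁ - σ₂))) * (2 ^ r)⁻¹) := by
  classical
  obtain ⟨F, hF, hcover⟩ := exists_finset_cover_lpMean_ball hp₁ hb (subcubes d j 0 0) r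
  rw [card_subcubes, Nat.sub_zero, mul_comm j, pow_mul 2 d j] at hF
  refine ⟨F.image ((2 : ℝ) ^ (-(j * σ₁)) • ·), card_image_le.trans hF, fun y hy ↦ ?_⟩
  have hball : lpMean p₁ (subcubes d j 0 0) ((2 : ℝ) ^ (j * σ₁) • y) ≤ 1 := by
    rw [lpMean_smul hp₁, abs_of_pos (by positivity), ← ENNReal.ofReal_le_one]
    exact (ofReal_mul_lpMean_le_levelNorm hp₁).trans hy
  obtain ⟨c, hc, hyc⟩ := hcover _ hball
  refine ⟨_, mem_image_of_mem _ hc, ?_⟩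
  have hnorm : ∀ m ∈ subcubes d j 0 0,
      ‖(y - (2 : ℝ) ^ (-(j * σ₁)) • c) m‖ ≤ 2 ^ (-(j * σ₁)) * (2 ^ r)⁻¹ := by
    intro m hm
    have hscale : (y - (2 : ℝ) ^ (-(j * σ₁)) • c) m =
        (2 : ℝ) ^ (-(j * σ₁)) • (((2 : ℝ) ^ (j * σ₁) • y) m - c m) := by
      simp only [Pi.sub_apply, Pi.smul_apply, smul_sub, smul_smul, ← Real.rpow_add two_pos,
        neg_add_cancel, Real.rpow_zero, one_smul]
    rw [hscale, norm_smul, Real.norm_of_nonneg (by positivity)]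
    gcongr
    exact hyc m hm
  convert levelNorm_le_of_norm_le hp₂ hu₂ (by positivity) hnorm using 2
  rw [← mul_assoc, ← Real.rpow_add two_pos]
  ring_nf

lemma two_rpow_neg_mul_inv_le {K J j : ℕ} (hK : 2 * s ≤ K) (hj : j ≤ J) :
    (2 : ℝ) ^ (-(j * s)) * (2 ^ (K * (J - j)))⁻¹ ≤
      2 ^ (-(J * s)) * 2 ^ (-(s * |(J : ℝ) - j|)) := by
  have hJj : (0 : ℝ) ≤ J - j := sub_nonneg.2 (Nat.cast_le.2 hj)
  rw [← Real.rpow_natCast, ← Real.rpow_neg two_pos.le, ← Real.rpow_add two_pos,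
    ← Real.rpow_add two_pos, abs_of_nonneg hJj]
  refine Real.rpow_le_rpow_of_exponent_le one_le_two ?_
  push_cast [hj]
  nlinarith

lemma exists_finset_cover_levelNorm_decay (hd : d ≠ 0) (hp₂ : 0 < p₂) (hp : p₂ ≤ p₁)
    (hu₂ : 0 < u₂) (hu : u₂ ≤ u₁) (hb : Real.exp (1 / p₁) ≤ 2 ^ b) {K : ℕ}
    (hK : 2 * (σ₁ - σ₂) ≤ K) (J : ℕ) :
    ∃ G : Finset (ℕ → (Fin d → ℤ) → ℂ), #G ≤ 2 ^ (8 * (K + (4 + b)) * ((2 ^ d) ^ J - 1)) ∧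
      ∀ x, (∀ j, levelNorm d σ₁ u₁ p₁ j (x j) ≤ 1) → ∃ c ∈ G, ∀ j,
        levelNorm d σ₂ u₂ p₂ j ((x - c) j) ≤
          ENNReal.ofReal (2 ^ (-(J * (σ₁ - σ₂))) * 2 ^ (-((σ₁ - σ₂) * |(J : ℝ) - j|))) := by
  choose F hF hcover using fun j ↦ exists_finset_cover_levelNorm (d := d) (σ₁ := σ₁) (σ₂ := σ₂)
    (u₁ := u₁) (hp₂.trans_le hp) hp₂ hu₂ hb j (K * (J - j))
  obtain ⟨G, hG, hmem⟩ := exists_finset_mem_of_forall_mem (range J) F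
  refine ⟨G, ?_, fun x hx ↦ ?_⟩
  · calc #G ≤ ∏ j ∈ range J, 2 ^ (4 * (K * (J - j) + 4 + b) * (2 ^ d) ^ j) :=
          hG.trans (prod_le_prod' fun j _ ↦ hF j)
      _ = 2 ^ (4 * ∑ j ∈ range J, (K * (J - j) + (4 + b)) * (2 ^ d) ^ j) := by
          simp only [prod_pow_eq_pow_sum, mul_sum, mul_assoc, add_assoc]
      _ ≤ 2 ^ (4 * (2 * (K + (4 + b)) * ((2 ^ d) ^ J - 1))) := by
          gcongr
          · exact one_le_two
          · exact sum_range_mul_sub_add_mul_pow_le (Nat.le_self_pow hd 2) K (4 + b) J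
      _ = 2 ^ (8 * (K + (4 + b)) * ((2 ^ d) ^ J - 1)) := by ring_nf
  · choose c hc hxc using fun j ↦ hcover j (x j) (hx j)
    refine ⟨fun j ↦ if j < J then c j else 0,
      hmem _ (fun j hj ↦ by simpa [mem_range.1 hj] using hc j)
        (fun j hj ↦ if_neg (mt mem_range.2 hj)), fun j ↦ ?_⟩
    rw [Pi.sub_apply]
    split_ifs with hj
    · exact (hxc j).trans (ENNReal.ofReal_le_ofReal (two_rpow_neg_mul_inv_le hK hj.le))
    · have hJj : (J : ℝ) - j ≤ 0 := sub_nonpos.2 (Nat.cast_le.2 (not_lt.1 hj))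
      have hexp : -(J * (σ₁ - σ₂)) + -((σ₁ - σ₂) * |(J : ℝ) - j|) = -(j * (σ₁ - σ₂)) := by
        rw [abs_of_nonpos hJj]
        ring
      rw [sub_zero, ← Real.rpow_add two_pos, hexp]
      exact (levelNorm_le_two_rpow_mul_levelNorm hp₂ hp hu₂ hu).trans
        (mul_le_of_le_one_right' (hx j))

lemma exists_entropyNumber_nNorm_le_two_rpow (hd : d ≠ 0) (hσ : σ₂ < σ₁) (hp₂ : 0 < p₂)
    (hp : p₂ ≤ p₁) (hu₂ : 0 < u₂) (hu : u₂ ≤ u₁) (hq₁ : q₁ ≠ 0) (hq₂ : q₂ ≠ 0) :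
    ∃ A : ℕ, 0 < A ∧ ∃ C : ℝ, 0 < C ∧ ∀ J k : ℕ, A * ((2 ^ d) ^ J - 1) ≤ k - 1 →
      entropyNumber (nNorm d σ₁ u₁ p₁ q₁) (nNorm d σ₂ u₂ p₂ q₂) k ≤
        ENNReal.ofReal (2 ^ (-(J * (σ₁ - σ₂))) * C) := by
  obtain ⟨b, hb⟩ := pow_unbounded_of_one_lt (Real.exp (1 / p₁)) one_lt_two
  obtain ⟨K, hK⟩ := exists_nat_ge (2 * (σ₁ - σ₂))
  obtain ⟨C, hCpos, hC⟩ := exists_nNorm_le_of_decay (sub_pos.2 hσ) hq₂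
  refine ⟨8 * (K + (4 + b)), by positivity, C, hCpos, fun J k hk ↦ ?_⟩
  obtain ⟨G, hG, hcover⟩ := exists_finset_cover_levelNorm_decay hd hp₂ hp hu₂ hu hb.le hK J
  refine entropyNumber_le_of_finset_cover (by positivity) G
    (hG.trans (Nat.pow_le_pow_right two_pos hk)) fun x hx ↦ ?_
  obtain ⟨c, hc, hxc⟩ := hcover x fun j ↦ (levelNorm_le_nNorm hq₁ x j).trans hx
  exact ⟨c, hc, hC (by positivity) hxc⟩

lemma two_rpow_neg_mul_le (hd : d ≠ 0) (hs : 0 ≤ s) {J : ℕ} (hA : 0 < A) (hk : 0 < k)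
    (hkJ : k ≤ A * (2 ^ d) ^ J) :
    (2 : ℝ) ^ (-(J * s)) ≤ A⁻¹ ^ (-s / d) * (k : ℝ) ^ (-s / d) := by
  rw [two_rpow_neg_mul_eq hd, ← Real.mul_rpow (by positivity) (by positivity)]
  refine Real.rpow_le_rpow_of_nonpos (by positivity) ?_
    (div_nonpos_of_nonpos_of_nonneg (neg_nonpos.2 hs) (by positivity))
  rwa [inv_mul_le_iff₀ hA]

lemma exists_entropyNumber_nNorm_le_mul_rpow (hd : d ≠ 0) (hσ : σ₂ < σ₁) (hp₂ : 0 < p₂)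
    (hp : p₂ ≤ p₁) (hu₂ : 0 < u₂) (hu : u₂ ≤ u₁) (hq₁ : q₁ ≠ 0) (hq₂ : q₂ ≠ 0) :
    ∃ C : ℝ, 0 < C ∧ ∀ k : ℕ, 0 < k →
      entropyNumber (nNorm d σ₁ u₁ p₁ q₁) (nNorm d σ₂ u₂ p₂ q₂) k ≤
        ENNReal.ofReal (C * k ^ (-(σ₁ - σ₂) / d)) := by
  obtain ⟨A, hA, C, hC, hentropy⟩ :=
    exists_entropyNumber_nNorm_le_two_rpow hd hσ hp₂ hp hu₂ hu hq₁ hq₂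
  refine ⟨C * (A * 2 ^ d : ℝ)⁻¹ ^ (-(σ₁ - σ₂) / d), by positivity, fun k hk ↦ ?_⟩
  set J := Nat.log (2 ^ d) ((k - 1) / A + 1)
  have hbits : A * ((2 ^ d) ^ J - 1) ≤ k - 1 := by
    calc A * ((2 ^ d) ^ J - 1) ≤ A * ((k - 1) / A) := by
          gcongr
          exact Nat.sub_le_of_le_add (Nat.pow_log_le_self _ (Nat.succ_ne_zero _))
      _ ≤ k - 1 := Nat.mul_div_le _ _
  have hk_le : k ≤ A * 2 ^ d * (2 ^ d) ^ J := by
    calc k ≤ A * ((k - 1) / A + 1) := by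
          have := Nat.lt_mul_div_succ (k - 1) hA
          omega
      _ ≤ A * (2 ^ d) ^ (J + 1) := by
          gcongr
          exact (Nat.lt_pow_succ_log_self (Nat.one_lt_two_pow hd) _).le
      _ = A * 2 ^ d * (2 ^ d) ^ J := by rw [pow_succ', mul_assoc]
  refine (hentropy J k hbits).trans (ENNReal.ofReal_le_ofReal ?_)
  rw [mul_comm _ C, mul_assoc]
  gcongr
  exact two_rpow_neg_mul_le hd (sub_nonneg.2 hσ.le) (by positivity) hk (by exact_mod_cast hk_le)

end UpperBound

lemma max_sub_div_eq_zero_iff {u₁ u₂ p₁ p₂ : ℝ} (hu₁ : 0 < u₁) (hu₂ : 0 < u₂) (hp₁ : 0 < p₁)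
    (hp₂ : 0 < p₂) :
    max (max 0 (1 / u₁ - 1 / u₂)) (p₁ / u₁ * (1 / p₁ - 1 / p₂)) = 0 ↔ u₂ ≤ u₁ ∧ p₂ ≤ p₁ := by
  rw [max_assoc, max_eq_left_iff, max_le_iff, ← smul_eq_mul,
    smul_nonpos_iff_nonpos_of_pos_left (div_pos hp₁ hu₁), sub_nonpos, sub_nonpos,
    one_div_le_one_div hu₁ hu₂, one_div_le_one_div hp₁ hp₂]

theorem stmt0_general {d : ℕ} (hd : d ≠ 0) {σ₁ σ₂ u₁ p₁ u₂ p₂ : ℝ} {q₁ q₂ : ℝ≥0∞}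
    (hq₁ : q₁ ≠ 0) (hq₂ : q₂ ≠ 0) (hp₂ : 0 < p₂) (hp : p₂ ≤ p₁) (hu₂ : 0 < u₂) (hu : u₂ ≤ u₁)
    (hσ : σ₂ < σ₁) :
    ∃ c₁ c₂ : ℝ, 0 < c₁ ∧ 0 < c₂ ∧ ∀ k : ℕ, 0 < k →
      ENNReal.ofReal (c₁ * k ^ (-(σ₁ - σ₂) / d)) ≤
          entropyNumber (nNorm d σ₁ u₁ p₁ q₁) (nNorm d σ₂ u₂ p₂ q₂) k ∧
        entropyNumber (nNorm d σ₁ u₁ p₁ q₁) (nNorm d σ₂ u₂ p₂ q₂) k ≤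
          ENNReal.ofReal (c₂ * k ^ (-(σ₁ - σ₂) / d)) := by
  obtain ⟨c₁, hc₁, hlower⟩ := exists_mul_rpow_le_entropyNumber_nNorm hd hσ.le
    (hp₂.trans_le hp) (hu₂.trans_le hu) hp₂ hq₁ hq₂
  obtain ⟨c₂, hc₂, hupper⟩ := exists_entropyNumber_nNorm_le_mul_rpow hd hσ hp₂ hp hu₂ hu hq₁ hq₂
  exact ⟨c₁, c₂, hc₁, hc₂, fun k hk ↦ ⟨hlower k hk, hupper k hk⟩⟩

end

theorem stmt0 (d : ℕ) (hd : 1 ≤ d) (σ1 σ2 u1 p1 u2 p2 : ℝ) (q1 q2 : ℝ≥0∞)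
    (hq1 : 0 < q1) (hq2 : 0 < q2)
    (hp1 : 0 < p1) (hp1u1 : p1 ≤ u1) (hp2 : 0 < p2) (hp2u2 : p2 ≤ u2)
    (hmax : max (max 0 (1 / u1 - 1 / u2)) (p1 / u1 * (1 / p1 - 1 / p2)) = 0)
    (hσ : (σ1 - σ2) / d > max (max 0 (1 / u1 - 1 / u2)) (p1 / u1 * (1 / p1 - 1 / p2))) :
    ∃ c1 c2 : ℝ, 0 < c1 ∧ 0 < c2 ∧ ∀ k : ℕ, 0 < k →
      ENNReal.ofReal (c1 * (k : ℝ) ^ (-(σ1 - σ2) / d)) ≤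
          entropyNumber (nNorm d σ1 u1 p1 q1) (nNorm d σ2 u2 p2 q2) k ∧
        entropyNumber (nNorm d σ1 u1 p1 q1) (nNorm d σ2 u2 p2 q2) k ≤
          ENNReal.ofReal (c2 * (k : ℝ) ^ (-(σ1 - σ2) / d)) := by
  obtain ⟨hu, hp⟩ :=
    (max_sub_div_eq_zero_iff (hp1.trans_le hp1u1) (hp2.trans_le hp2u2) hp1 hp2).1 hmax
  rw [hmax, gt_iff_lt, div_pos_iff_of_pos_right (Nat.cast_pos.2 hd), sub_pos] at hσ
  exact stmt0_general (Nat.one_le_iff_ne_zero.1 hd) hq1.ne' hq2.ne' hp2 hp (hp2.trans_le hp2u2) hu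
    hσ
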